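/- Assume a = b = 2 and t = p − 1 = 3. Then: (i) q_s(1/2) ≤ 2 for every block array s, with equality if and only if s ∈ Q₁* ∪ Q₂*; and (ii) for every real x ≠ 1/2, max_{s∈S} q_s(x) > 2. (That is, x* = 1/2, y* = 2 and Q = Q₁* ∪ Q₂*.) -/

import Mathlib

open Matrix

namespace TwoDim

/-- The set of plots of an `a × b` block. -/
abbrev Plot (a b : ℕ) := Fin a × Fin b

/-- A block array: an assignment of one of `t` treatments to each plot. -/
abbrev BlockArray (a b t : ℕ) := Plot a b → Fin t

/-- The all-ones matrix. -/
def Jmat (n : Type*) : Matrix n n ℝ := Matrix.of fun _ _ => 1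

/-- `B_m = I - J/m`. -/
noncomputable def Bmat (n : Type*) [Fintype n] [DecidableEq n] : Matrix n n ℝ :=
  1 - ((Fintype.card n : ℝ))⁻¹ • Jmat n

variable {a b t : ℕ}

/-- The treatment incidence matrix `T_s`. -/
def Tmat (s : BlockArray a b t) : Matrix (Plot a b) (Fin t) ℝ :=
  Matrix.of fun q k => if s q = k then 1 else 0

/-- Two plots are neighbors if they agree in one coordinate and differ by 1 in the other. -/
def Neighbor (q r : Plot a b) : Prop :=
  (q.1 = r.1 ∧ (q.2.val + 1 = r.2.val ∨ r.2.val + 1 = q.2.val)) ∨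
  (q.2 = r.2 ∧ (q.1.val + 1 = r.1.val ∨ r.1.val + 1 = q.1.val))

instance (q r : Plot a b) : Decidable (Neighbor q r) := by
  unfold Neighbor; infer_instance

/-- The adjacency matrix of the neighbor relation. -/
def Mmat (a b : ℕ) : Matrix (Plot a b) (Plot a b) ℝ :=
  Matrix.of fun q r => if Neighbor q r then 1 else 0

/-- `F_s = M T_s`. -/
def Fmat (s : BlockArray a b t) : Matrix (Plot a b) (Fin t) ℝ :=
  Mmat a b * Tmat s

/-- `B̃ = Σ⁻¹ − Σ⁻¹ J Σ⁻¹ / (1'Σ⁻¹1)`. -/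
noncomputable def Btilde (Sig : Matrix (Plot a b) (Plot a b) ℝ) :
    Matrix (Plot a b) (Plot a b) ℝ :=
  Sig⁻¹ - (∑ i, ∑ j, Sig⁻¹ i j)⁻¹ • (Sig⁻¹ * Jmat (Plot a b) * Sig⁻¹)

/-- `C_{s00} = T_s' W T_s` (with `W` playing the role of `B̃`). -/
def Cs00 (W : Matrix (Plot a b) (Plot a b) ℝ) (s : BlockArray a b t) :
    Matrix (Fin t) (Fin t) ℝ := (Tmat s)ᵀ * W * Tmat s

/-- `C_{s01} = T_s' W F_s`. -/
def Cs01 (W : Matrix (Plot a b) (Plot a b) ℝ) (s : BlockArray a b t) :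
    Matrix (Fin t) (Fin t) ℝ := (Tmat s)ᵀ * W * Fmat s

/-- `C_{s11} = F_s' W F_s`. -/
def Cs11 (W : Matrix (Plot a b) (Plot a b) ℝ) (s : BlockArray a b t) :
    Matrix (Fin t) (Fin t) ℝ := (Fmat s)ᵀ * W * Fmat s

/-- `c_{s00} = tr(B_t C_{s00})`. -/
noncomputable def cs00 (W : Matrix (Plot a b) (Plot a b) ℝ) (s : BlockArray a b t) : ℝ :=
  Matrix.trace (Bmat (Fin t) * Cs00 W s)

noncomputable def cs01 (W : Matrix (Plot a b) (Plot a b) ℝ) (s : BlockArray a b t) : ℝ :=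
  Matrix.trace (Bmat (Fin t) * Cs01 W s)

noncomputable def cs11 (W : Matrix (Plot a b) (Plot a b) ℝ) (s : BlockArray a b t) : ℝ :=
  Matrix.trace (Bmat (Fin t) * Cs11 W s)

/-- The quadratic `q_s(x) = c_{s00} + 2 c_{s01} x + c_{s11} x²`. -/
noncomputable def qpoly (W : Matrix (Plot a b) (Plot a b) ℝ) (s : BlockArray a b t) (x : ℝ) : ℝ :=
  cs00 W s + 2 * cs01 W s * x + cs11 W s * x ^ 2

/-- A measure on the set of block arrays: nonnegative weights summing to one. -/
def IsMeasure (ξ : BlockArray a b t → ℝ) : Prop :=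
  (∀ s, 0 ≤ ξ s) ∧ ∑ s, ξ s = 1

noncomputable def Cm00 (W : Matrix (Plot a b) (Plot a b) ℝ) (ξ : BlockArray a b t → ℝ) :
    Matrix (Fin t) (Fin t) ℝ := ∑ s, ξ s • Cs00 W s

noncomputable def Cm01 (W : Matrix (Plot a b) (Plot a b) ℝ) (ξ : BlockArray a b t → ℝ) :
    Matrix (Fin t) (Fin t) ℝ := ∑ s, ξ s • Cs01 W s

noncomputable def Cm11 (W : Matrix (Plot a b) (Plot a b) ℝ) (ξ : BlockArray a b t → ℝ) :
    Matrix (Fin t) (Fin t) ℝ := ∑ s, ξ s • Cs11 W s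

noncomputable def cm00 (W : Matrix (Plot a b) (Plot a b) ℝ) (ξ : BlockArray a b t → ℝ) : ℝ :=
  ∑ s, ξ s * cs00 W s

noncomputable def cm01 (W : Matrix (Plot a b) (Plot a b) ℝ) (ξ : BlockArray a b t → ℝ) : ℝ :=
  ∑ s, ξ s * cs01 W s

noncomputable def cm11 (W : Matrix (Plot a b) (Plot a b) ℝ) (ξ : BlockArray a b t → ℝ) : ℝ :=
  ∑ s, ξ s * cs11 W s

/-- `q*_ξ = c_{ξ00} − c_{ξ01}²/c_{ξ11}`. -/
noncomputable def qstar (W : Matrix (Plot a b) (Plot a b) ℝ) (ξ : BlockArray a b t → ℝ) : ℝ :=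
  cm00 W ξ - (cm01 W ξ) ^ 2 / cm11 W ξ

/-- `G` is a generalized inverse of `A`. -/
def IsGenInv (A G : Matrix (Fin t) (Fin t) ℝ) : Prop := A * G * A = A

/-- Information matrix `C_{ξ00} − C_{ξ01} G C_{ξ10}` computed with a generalized inverse `G`. -/
noncomputable def InfoMat (W : Matrix (Plot a b) (Plot a b) ℝ) (ξ : BlockArray a b t → ℝ)
    (G : Matrix (Fin t) (Fin t) ℝ) : Matrix (Fin t) (Fin t) ℝ :=
  Cm00 W ξ - Cm01 W ξ * G * (Cm01 W ξ)ᵀ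

/-- A criterion `Φ` on `t×t` real symmetric matrices: concave, Loewner-nondecreasing, and
invariant under simultaneous permutations of rows and columns. -/
def GoodPhi (t : ℕ) (Φ : Matrix (Fin t) (Fin t) ℝ → ℝ) : Prop :=
  (∀ A B : Matrix (Fin t) (Fin t) ℝ, A.IsSymm → B.IsSymm → ∀ α : ℝ, 0 ≤ α → α ≤ 1 →
      α * Φ A + (1 - α) * Φ B ≤ Φ (α • A + (1 - α) • B)) ∧
  (∀ A B : Matrix (Fin t) (Fin t) ℝ, A.IsSymm → B.IsSymm → (B - A).PosSemidef → Φ A ≤ Φ B) ∧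
  (∀ (σ : Equiv.Perm (Fin t)) (C : Matrix (Fin t) (Fin t) ℝ), Φ (C.submatrix σ σ) = Φ C)

/-- Universal optimality of a measure `ξ`. -/
def UnivOptimal (W : Matrix (Plot a b) (Plot a b) ℝ) (ξ : BlockArray a b t → ℝ) : Prop :=
  ∀ η : BlockArray a b t → ℝ, IsMeasure η →
    ∀ G H : Matrix (Fin t) (Fin t) ℝ, IsGenInv (Cm11 W ξ) G → IsGenInv (Cm11 W η) H →
      ∀ Φ : Matrix (Fin t) (Fin t) ℝ → ℝ, GoodPhi t Φ →
        Φ (InfoMat W η H) ≤ Φ (InfoMat W ξ G)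

/-- A measure is symmetric if it is invariant under relabeling of the treatments. -/
def IsSymmetricMeasure (ξ : BlockArray a b t → ℝ) : Prop :=
  ∀ (σ : Equiv.Perm (Fin t)) (s : BlockArray a b t), ξ (fun q => σ (s q)) = ξ s

/-- A matrix is completely symmetric if it is of the form `αI + βJ`. -/
def ComplSym (A : Matrix (Fin t) (Fin t) ℝ) : Prop :=
  ∃ α β : ℝ, A = α • (1 : Matrix (Fin t) (Fin t) ℝ) + β • Jmat (Fin t)

/-- A measure is pseudo symmetric if `C_{ξ00}`, `C_{ξ01}`, `C_{ξ11}` are completely symmetric. -/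
def PseudoSym (W : Matrix (Plot a b) (Plot a b) ℝ) (ξ : BlockArray a b t → ℝ) : Prop :=
  ComplSym (Cm00 W ξ) ∧ ComplSym (Cm01 W ξ) ∧ ComplSym (Cm11 W ξ)

/-- `r(x) = max_{s∈S} q_s(x)`. -/
noncomputable def rfun {a b : ℕ} (t : ℕ) (W : Matrix (Plot a b) (Plot a b) ℝ) (x : ℝ) : ℝ :=
  sSup (Set.range fun s : BlockArray a b t => qpoly W s x)

/-- `min_{s∈S} q_s(x)`. -/
noncomputable def rmin {a b : ℕ} (t : ℕ) (W : Matrix (Plot a b) (Plot a b) ℝ) (x : ℝ) : ℝ :=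
  sInf (Set.range fun s : BlockArray a b t => qpoly W s x)

/-- Number of plots assigned treatment `k` by `s`. -/
noncomputable def f0 (s : BlockArray a b t) (k : Fin t) : ℕ :=
  {q : Plot a b | s q = k}.ncard

/-- Replications of `k` among the columns `1,…,b−1`. -/
noncomputable def f1 (s : BlockArray a b t) (k : Fin t) : ℕ :=
  {q : Plot a b | s q = k ∧ q.2.val + 1 < b}.ncard

/-- Replications of `k` among the columns `2,…,b`. -/
noncomputable def f2 (s : BlockArray a b t) (k : Fin t) : ℕ :=
  {q : Plot a b | s q = k ∧ 1 ≤ q.2.val}.ncard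

/-- Replications of `k` among the rows `1,…,a−1`. -/
noncomputable def f3 (s : BlockArray a b t) (k : Fin t) : ℕ :=
  {q : Plot a b | s q = k ∧ q.1.val + 1 < a}.ncard

/-- Replications of `k` among the rows `2,…,a`. -/
noncomputable def f4 (s : BlockArray a b t) (k : Fin t) : ℕ :=
  {q : Plot a b | s q = k ∧ 1 ≤ q.1.val}.ncard

noncomputable def fc (s : BlockArray a b t) : ℕ → Fin t → ℕ
  | 0 => f0 s
  | 1 => f1 s
  | 2 => f2 s
  | 3 => f3 s
  | 4 => f4 s
  | _ => fun _ => 0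

/-- `h^{uv}_s = Σ_k f^u_{s,k} f^v_{s,k}`. -/
noncomputable def hval (s : BlockArray a b t) (u v : ℕ) : ℝ :=
  ∑ k : Fin t, (fc s u k : ℝ) * (fc s v k : ℝ)

noncomputable def h00 (s : BlockArray a b t) : ℝ := hval s 0 0

noncomputable def h1 (s : BlockArray a b t) : ℝ :=
  hval s 0 1 + hval s 0 2 + hval s 0 3 + hval s 0 4

noncomputable def h2 (s : BlockArray a b t) : ℝ :=
  hval s 1 1 + hval s 2 2 + hval s 3 3 + hval s 4 4

noncomputable def h3 (s : BlockArray a b t) : ℝ :=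
  hval s 1 2 + hval s 1 3 + hval s 1 4 + hval s 2 3 + hval s 2 4 + hval s 3 4

/-- `z¹_{s,r}`: horizontally adjacent pairs of plots receiving the same treatment. -/
noncomputable def zr1 (s : BlockArray a b t) : ℕ :=
  {qr : Plot a b × Plot a b |
    qr.1.1 = qr.2.1 ∧ qr.1.2.val + 1 = qr.2.2.val ∧ s qr.1 = s qr.2}.ncard

noncomputable def zr2 (s : BlockArray a b t) : ℕ :=
  {qr : Plot a b × Plot a b |
    qr.1.1 = qr.2.1 ∧ qr.1.2.val + 2 = qr.2.2.val ∧ s qr.1 = s qr.2}.ncard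

noncomputable def zc1 (s : BlockArray a b t) : ℕ :=
  {qr : Plot a b × Plot a b |
    qr.1.2 = qr.2.2 ∧ qr.1.1.val + 1 = qr.2.1.val ∧ s qr.1 = s qr.2}.ncard

noncomputable def zc2 (s : BlockArray a b t) : ℕ :=
  {qr : Plot a b × Plot a b |
    qr.1.2 = qr.2.2 ∧ qr.1.1.val + 2 = qr.2.1.val ∧ s qr.1 = s qr.2}.ncard

/-- pairs `(i,j)`, `(i−1,j+1)` with the same treatment. -/
noncomputable def zd1 (s : BlockArray a b t) : ℕ :=
  {qr : Plot a b × Plot a b |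
    qr.2.1.val + 1 = qr.1.1.val ∧ qr.1.2.val + 1 = qr.2.2.val ∧ s qr.1 = s qr.2}.ncard

/-- pairs `(i,j)`, `(i+1,j+1)` with the same treatment. -/
noncomputable def zd2 (s : BlockArray a b t) : ℕ :=
  {qr : Plot a b × Plot a b |
    qr.1.1.val + 1 = qr.2.1.val ∧ qr.1.2.val + 1 = qr.2.2.val ∧ s qr.1 = s qr.2}.ncard

noncomputable def z1 (s : BlockArray a b t) : ℝ := 2 * zr1 s + 2 * zc1 s

noncomputable def z2 (s : BlockArray a b t) : ℝ :=
  2 * zr2 s + 2 * zc2 s + 4 * zd1 s + 4 * zd2 s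

/-- `η = 4p − 2a − 2b − 2(8ab − 7a − 7b + 4)/t + 4(2p − a − b)²/(pt)` where `p = ab`. -/
noncomputable def eta (a b t : ℕ) : ℝ :=
  4 * ((a : ℝ) * b) - 2 * a - 2 * b - 2 * (8 * (a : ℝ) * b - 7 * a - 7 * b + 4) / t +
    4 * (2 * (a : ℝ) * b - a - b) ^ 2 / (((a : ℝ) * b) * t)

/-- A corner plot of the `a × b` block. -/
def IsCorner (q : Plot a b) : Prop :=
  (q.1.val = 0 ∨ q.1.val + 1 = a) ∧ (q.2.val = 0 ∨ q.2.val + 1 = b)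

/-- Treatment `k` is significant in `s`: it occupies exactly two plots, which are
neighbors, at least one of them being a corner plot. -/
def Significant (s : BlockArray a b t) (k : Fin t) : Prop :=
  ∃ u v : Plot a b, u ≠ v ∧ {q : Plot a b | s q = k} = {u, v} ∧
    Neighbor u v ∧ (IsCorner u ∨ IsCorner v)

/-- Treatment `k` is strictly significant in `s`: both of its two plots are corners. -/
def StrictSignificant (s : BlockArray a b t) (k : Fin t) : Prop :=
  ∃ u v : Plot a b, u ≠ v ∧ {q : Plot a b | s q = k} = {u, v} ∧
    Neighbor u v ∧ IsCorner u ∧ IsCorner v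

/-- `Q_i`: block arrays with exactly `i` significant treatments in which every other
treatment appears at most once. -/
def Qset (a b t : ℕ) (i : ℕ) : Set (BlockArray a b t) :=
  {s | {k : Fin t | Significant s k}.ncard = i ∧
       ∀ k : Fin t, ¬ Significant s k → f0 s k ≤ 1}

/-- `Q_j*`: members of `Q_j` whose significant treatments are all strictly significant. -/
def QsetStar (a b t : ℕ) (j : ℕ) : Set (BlockArray a b t) :=
  {s | s ∈ Qset a b t j ∧ ∀ k : Fin t, Significant s k → StrictSignificant s k}

/-- Treatment `k` is connected in `s`. -/
def ConnectedIn (s : BlockArray a b t) (k : Fin t) : Prop :=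
  ∀ q r : Plot a b, s q = k → s r = k →
    Relation.ReflTransGen (fun u v => Neighbor u v ∧ s u = k ∧ s v = k) q r

/-!
In the `2 × 2` block every plot is a neighbor of every other one except itself and its antipode, so
`M = J - 1 - A` with `A` the permutation matrix of the antipode. As `A² = 1` and `AJ = JA = J`, the
kernel `(1 + xM) B (1 + xM)` of `q_s(x)` lies in the span of `1`, `A` and `J`, whence
`q_s(x) = 2 - m/2 + (1 - 2x)² (2 + m/2 - N/4)`, where `m` counts the plots sharing the treatment of
their antipode and `N` the ordered pairs of plots with a common treatment. At `x = 1/2` this is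
`2 - m/2`, and `m = 0` says that any treatment occurring more than once occupies exactly two
neighboring plots. With at least three treatments some array has `m = 0` and `N = 6`, so that
`q_s(x) > 2` off `1/2`.
-/

section AllOnesAndCentering

variable {n : Type*} [Fintype n]

lemma Jmat_mul_Jmat : Jmat n * Jmat n = (Fintype.card n : ℝ) • Jmat n := by
  ext; simp [Jmat, mul_apply]

lemma Jmat_mul_permMatrix [DecidableEq n] (σ : Equiv.Perm n) :
    Jmat n * σ.permMatrix ℝ = Jmat n := by
  ext; simp [Jmat, mul_apply, PEquiv.toMatrix_apply, ← Equiv.eq_symm_apply]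

lemma permMatrix_mul_Jmat [DecidableEq n] (σ : Equiv.Perm n) :
    σ.permMatrix ℝ * Jmat n = Jmat n := by
  ext; simp [Jmat, mul_apply, PEquiv.toMatrix_apply]

lemma Bmat_isSymm [DecidableEq n] : (Bmat n).IsSymm := by
  ext; simp [Bmat, Jmat, Matrix.one_apply, eq_comm]

lemma Bmat_mulVec_one [DecidableEq n] [Nonempty n] : Bmat n *ᵥ 1 = 0 := by
  ext; simp [Bmat, Jmat, Matrix.one_apply, mulVec, dotProduct]

lemma trace_Bmat_mul_of_mulVec_one_eq_zero [DecidableEq n] {C : Matrix n n ℝ} (hC : C *ᵥ 1 = 0) :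
    trace (Bmat n * C) = trace C := by
  have hJ : trace (Jmat n * C) = 0 := by
    rw [trace_mul_comm]
    simpa [trace, Jmat, mul_apply, mulVec, dotProduct] using congrArg (∑ i, · i) hC
  simp [Bmat, sub_mul, trace_sub, hJ]

end AllOnesAndCentering

section QuadraticAsTrace

lemma Tmat_mulVec_one (s : BlockArray a b t) : Tmat s *ᵥ 1 = 1 := by
  ext; simp [Tmat, mulVec, dotProduct]

lemma Neighbor.symm {q r : Plot a b} (h : Neighbor q r) : Neighbor r q := by
  unfold Neighbor at *; grind

lemma Mmat_isSymm : (Mmat a b).IsSymm := by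
  ext q r
  simp [Mmat, show Neighbor r q ↔ Neighbor q r from ⟨.symm, .symm⟩]

/-- The matrix `K` with `q_s(x) = tr(T_s' K T_s)`, for `M` regular and `W` symmetric with zero row
sums. -/
def qpolyKernel (W : Matrix (Plot a b) (Plot a b) ℝ) (x : ℝ) : Matrix (Plot a b) (Plot a b) ℝ :=
  (1 + x • Mmat a b) * W * (1 + x • Mmat a b)

-- Regularity makes every row of `T_s` and of `F_s` have a constant sum, so that the rows of the
-- matrices `C_{s..}` sum to zero and the centering by `B_t` has no effect.
lemma qpoly_eq_trace_qpolyKernel {W : Matrix (Plot a b) (Plot a b) ℝ} (hW : W.IsSymm)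
    (hW₁ : W *ᵥ 1 = 0) {d : ℝ} (hM : Mmat a b *ᵥ 1 = d • 1) (s : BlockArray a b t) (x : ℝ) :
    qpoly W s x = trace ((Tmat s)ᵀ * qpolyKernel W x * Tmat s) := by
  have hF : Fmat s *ᵥ 1 = d • 1 := by rw [Fmat, ← mulVec_mulVec, Tmat_mulVec_one, hM]
  have hc00 : cs00 W s = trace ((Tmat s)ᵀ * W * Tmat s) :=
    trace_Bmat_mul_of_mulVec_one_eq_zero <| by
      simp [Cs00, ← mulVec_mulVec, Tmat_mulVec_one, hW₁]
  have hc01 : cs01 W s = trace ((Tmat s)ᵀ * W * Fmat s) :=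
    trace_Bmat_mul_of_mulVec_one_eq_zero <| by
      simp [Cs01, ← mulVec_mulVec, hF, mulVec_smul, hW₁]
  have hc11 : cs11 W s = trace ((Fmat s)ᵀ * W * Fmat s) :=
    trace_Bmat_mul_of_mulVec_one_eq_zero <| by
      simp [Cs11, ← mulVec_mulVec, hF, mulVec_smul, hW₁]
  have hc10 : trace ((Fmat s)ᵀ * W * Tmat s) = trace ((Tmat s)ᵀ * W * Fmat s) := by
    rw [← trace_transpose]
    simp [hW.eq, Matrix.mul_assoc]
  have hK : (Tmat s)ᵀ * qpolyKernel W x * Tmat s =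
      (Tmat s)ᵀ * W * Tmat s + x • ((Fmat s)ᵀ * W * Tmat s) + x • ((Tmat s)ᵀ * W * Fmat s) +
        x ^ 2 • ((Fmat s)ᵀ * W * Fmat s) := by
    simp only [qpolyKernel, Fmat, transpose_mul, Mmat_isSymm.eq, Matrix.mul_add, Matrix.add_mul,
      Matrix.mul_one, Matrix.one_mul, Matrix.mul_smul, Matrix.smul_mul, Matrix.mul_assoc]
    module
  rw [hK, qpoly, hc00, hc01, hc11]
  simp only [trace_add, trace_smul, hc10, smul_eq_mul]
  ring

end QuadraticAsTrace

section Coincidences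

/-- The point reflection of an `a × b` block through its center. -/
def antipode : Equiv.Perm (Plot a b) :=
  Fin.revPerm.prodCongr Fin.revPerm

/-- The number of ordered pairs of plots, equal or not, which receive the same treatment. -/
def coincidences (s : BlockArray a b t) : ℕ :=
  Finset.card {qr : Plot a b × Plot a b | s qr.1 = s qr.2}

/-- The number of plots which receive the same treatment as their antipode. -/
def antipodalCoincidences (s : BlockArray a b t) : ℕ :=
  Finset.card {q : Plot a b | s q = s (antipode q)}

lemma trace_transpose_Tmat_mul_mul_Tmat (W : Matrix (Plot a b) (Plot a b) ℝ)
    (s : BlockArray a b t) :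
    trace ((Tmat s)ᵀ * W * Tmat s) = ∑ q, ∑ r, W q r * if s q = s r then 1 else 0 := by
  have hTT : Tmat s * (Tmat s)ᵀ = of fun r q => if s q = s r then 1 else 0 := by
    ext; simp [Tmat, mul_apply, eq_comm]
  rw [trace_mul_cycle, hTT, Finset.sum_comm]
  simp [trace, mul_apply]

lemma trace_transpose_Tmat_mul_Tmat (s : BlockArray a b t) :
    trace ((Tmat s)ᵀ * Tmat s) = a * b := by
  rw [← Matrix.mul_one (Tmat s)ᵀ, trace_transpose_Tmat_mul_mul_Tmat]
  simp [Matrix.one_apply, -mul_ite]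

lemma trace_transpose_Tmat_mul_Jmat_mul_Tmat (s : BlockArray a b t) :
    trace ((Tmat s)ᵀ * Jmat (Plot a b) * Tmat s) = coincidences s := by
  rw [trace_transpose_Tmat_mul_mul_Tmat, ← Fintype.sum_prod_type']
  simp [Jmat, coincidences]

lemma trace_transpose_Tmat_mul_permMatrix_antipode_mul_Tmat (s : BlockArray a b t) :
    trace ((Tmat s)ᵀ * (antipode : Equiv.Perm (Plot a b)).permMatrix ℝ * Tmat s) =
      antipodalCoincidences s := by
  rw [trace_transpose_Tmat_mul_mul_Tmat]
  simp [PEquiv.toMatrix_apply, antipodalCoincidences, -mul_ite]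

lemma antipodalCoincidences_eq_zero {s : BlockArray a b t} :
    antipodalCoincidences s = 0 ↔ ∀ q, s q ≠ s (antipode q) := by
  simp [antipodalCoincidences, Finset.filter_eq_empty_iff]

end Coincidences

section TwoByTwo

lemma permMatrix_antipode_mul_self :
    (antipode : Equiv.Perm (Plot a b)).permMatrix ℝ * antipode.permMatrix ℝ = 1 := by
  have h : (antipode : Equiv.Perm (Plot a b)) * antipode = 1 := by ext <;> simp [antipode]
  rw [← permMatrix_mul, h, permMatrix_one]

lemma antipode_two_two_ne (q : Plot 2 2) : antipode q ≠ q := by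
  revert q; decide

lemma neighbor_two_two_iff {q r : Plot 2 2} : Neighbor q r ↔ r ≠ q ∧ r ≠ antipode q := by
  revert q r; decide

lemma Neighbor.eq_or_eq_antipode_two_two {u v : Plot 2 2} (h : Neighbor u v) (w : Plot 2 2) :
    w = u ∨ w = v ∨ w = antipode u ∨ w = antipode v := by
  revert u v w; decide

lemma Mmat_two_two : Mmat 2 2 = Jmat (Plot 2 2) - 1 - antipode.permMatrix ℝ := by
  ext q r
  have hq := antipode_two_two_ne q
  simp only [Mmat, Jmat, of_apply, Matrix.sub_apply, Matrix.one_apply, PEquiv.toMatrix_apply,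
    Equiv.toPEquiv_apply, Option.mem_some_iff, neighbor_two_two_iff]
  grind

lemma Mmat_two_two_mulVec_one : Mmat 2 2 *ᵥ 1 = (2 : ℝ) • 1 := by
  ext
  norm_num [Mmat_two_two, Matrix.one_apply, Jmat, mulVec, dotProduct, PEquiv.toMatrix_apply]

lemma qpolyKernel_two_two (x : ℝ) :
    qpolyKernel (Bmat (Plot 2 2)) x =
      ((1 + (1 - 2 * x) ^ 2) / 2) • (1 : Matrix (Plot 2 2) (Plot 2 2) ℝ)
        - ((1 - (1 - 2 * x) ^ 2) / 2) • antipode.permMatrix ℝ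
        - ((1 - 2 * x) ^ 2 / 4) • Jmat (Plot 2 2) := by
  have hJJ : Jmat (Plot 2 2) * Jmat (Plot 2 2) = (4 : ℝ) • Jmat (Plot 2 2) := by
    rw [Jmat_mul_Jmat]; norm_num
  have hB : Bmat (Plot 2 2) = 1 - (4 : ℝ)⁻¹ • Jmat (Plot 2 2) := by
    rw [Bmat]; norm_num
  rw [qpolyKernel, hB, Mmat_two_two]
  simp only [mul_add, add_mul, mul_sub, sub_mul, mul_one, one_mul, smul_mul_assoc, mul_smul_comm,
    smul_sub, smul_add, hJJ, Jmat_mul_permMatrix, permMatrix_mul_Jmat,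
    permMatrix_antipode_mul_self]
  module

lemma qpoly_two_two (s : BlockArray 2 2 t) (x : ℝ) :
    qpoly (Bmat (Plot 2 2)) s x =
      2 - antipodalCoincidences s / 2
        + (1 - 2 * x) ^ 2 * (2 + antipodalCoincidences s / 2 - coincidences s / 4) := by
  rw [qpoly_eq_trace_qpolyKernel Bmat_isSymm Bmat_mulVec_one Mmat_two_two_mulVec_one,
    qpolyKernel_two_two]
  simp only [Matrix.mul_sub, Matrix.sub_mul, Matrix.mul_smul, Matrix.smul_mul, trace_sub,
    trace_smul, Matrix.mul_one, smul_eq_mul, trace_transpose_Tmat_mul_Tmat,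
    trace_transpose_Tmat_mul_Jmat_mul_Tmat, trace_transpose_Tmat_mul_permMatrix_antipode_mul_Tmat]
  push_cast
  ring

lemma qpoly_two_two_half (s : BlockArray 2 2 t) :
    qpoly (Bmat (Plot 2 2)) s (1 / 2) = 2 - antipodalCoincidences s / 2 := by
  rw [qpoly_two_two]; ring

end TwoByTwo

section Significance

lemma Significant.f0_eq_two {s : BlockArray a b t} {k : Fin t} (h : Significant s k) :
    f0 s k = 2 := by
  obtain ⟨u, v, huv, hk, -⟩ := h
  rw [f0, hk, Set.ncard_pair huv]

lemma sum_f0 (s : BlockArray a b t) : ∑ k, f0 s k = a * b := by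
  have h := Finset.card_eq_sum_card_fiberwise (f := s) (s := .univ) (t := .univ) (by simp)
  simpa [f0, Set.ncard_eq_toFinset_card', eq_comm] using h

lemma two_mul_le_of_mem_Qset {i : ℕ} {s : BlockArray a b t} (hs : s ∈ Qset a b t i) :
    2 * i ≤ a * b := by
  classical
  calc 2 * i = ∑ k with Significant s k, f0 s k := by
        rw [Finset.sum_congr rfl fun k hk => (Finset.mem_filter.1 hk).2.f0_eq_two, ← hs.1]
        simp [Set.ncard_eq_toFinset_card', mul_comm]
    _ ≤ ∑ k, f0 s k := Finset.sum_le_sum_of_subset (Finset.filter_subset _ _)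
    _ = a * b := sum_f0 s

lemma le_add_of_mem_Qset {i : ℕ} {s : BlockArray a b t} (hs : s ∈ Qset a b t i) :
    a * b ≤ t + i := by
  classical
  calc a * b = ∑ k, f0 s k := (sum_f0 s).symm
    _ ≤ ∑ k, (1 + if Significant s k then 1 else 0) := by
        refine Finset.sum_le_sum fun k _ => ?_
        split_ifs with hk
        · exact hk.f0_eq_two.le
        · exact hs.2 k hk
    _ = t + i := by
        rw [← hs.1]
        simp [Finset.sum_add_distrib, Set.ncard_eq_toFinset_card']

lemma Significant.neighbor {s : BlockArray a b t} {q r : Plot a b} (h : Significant s (s q))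
    (hqr : q ≠ r) (hs : s q = s r) : Neighbor q r := by
  obtain ⟨u, v, -, hk, hN, -⟩ := h
  have hq : q ∈ ({u, v} : Set _) := hk.subset rfl
  have hr : r ∈ ({u, v} : Set _) := hk.subset hs.symm
  rcases hq with rfl | rfl <;> rcases hr with rfl | rfl
  exacts [absurd rfl hqr, hN, hN.symm, absurd rfl hqr]

lemma neighbor_of_forall_f0_le_one {s : BlockArray a b t}
    (h : ∀ k, ¬Significant s k → f0 s k ≤ 1) {q r : Plot a b} (hqr : q ≠ r) (hs : s q = s r) :
    Neighbor q r := by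
  by_cases hk : Significant s (s q)
  · exact hk.neighbor hqr hs
  · exact absurd ((Set.ncard_le_one_iff).1 (h _ hk) rfl hs.symm) hqr

lemma isCorner_two_two (q : Plot 2 2) : IsCorner q := by
  unfold IsCorner; omega

lemma Significant.strictSignificant_two_two {s : BlockArray 2 2 t} {k : Fin t}
    (h : Significant s k) : StrictSignificant s k := by
  obtain ⟨u, v, huv, hk, hN, -⟩ := h
  exact ⟨u, v, huv, hk, hN, isCorner_two_two u, isCorner_two_two v⟩

lemma exists_mem_QsetStar_two_two_iff {s : BlockArray 2 2 t} :
    (∃ i, s ∈ QsetStar 2 2 t i) ↔ ∀ k, ¬Significant s k → f0 s k ≤ 1 :=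
  ⟨fun ⟨_, hs⟩ => hs.1.2, fun h => ⟨_, ⟨rfl, h⟩, fun _ hk => hk.strictSignificant_two_two⟩⟩

lemma exists_mem_QsetStar_two_two_three_iff {s : BlockArray 2 2 3} :
    (∃ i, s ∈ QsetStar 2 2 3 i) ↔ s ∈ QsetStar 2 2 3 1 ∪ QsetStar 2 2 3 2 := by
  refine ⟨fun ⟨i, hs⟩ => ?_, fun hs => hs.elim (⟨1, ·⟩) (⟨2, ·⟩)⟩
  have hi₂ := two_mul_le_of_mem_Qset hs.1
  have hi₁ := le_add_of_mem_Qset hs.1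
  obtain rfl | rfl : i = 1 ∨ i = 2 := by omega
  exacts [.inl hs, .inr hs]

lemma significant_of_one_lt_f0 {s : BlockArray 2 2 t} (hs : ∀ q, s q ≠ s (antipode q))
    {k : Fin t} (hk : 1 < f0 s k) : Significant s k := by
  obtain ⟨u, v, rfl, hv, huv⟩ := (Set.one_lt_ncard_iff).1 hk
  have hN : Neighbor u v := neighbor_two_two_iff.2 ⟨huv.symm, fun h => hs u (h ▸ hv.symm)⟩
  refine ⟨u, v, huv, Set.ext fun w => ⟨fun hw => ?_, ?_⟩, hN, .inl (isCorner_two_two u)⟩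
  · rcases hN.eq_or_eq_antipode_two_two w with rfl | rfl | rfl | rfl
    · exact .inl rfl
    · exact .inr rfl
    · exact absurd hw.symm (hs u)
    · exact absurd (hv.trans hw.symm) (hs v)
  · rintro (rfl | rfl)
    exacts [rfl, hv]

lemma antipodalCoincidences_eq_zero_iff_exists_mem_QsetStar {s : BlockArray 2 2 t} :
    antipodalCoincidences s = 0 ↔ ∃ i, s ∈ QsetStar 2 2 t i := by
  rw [antipodalCoincidences_eq_zero, exists_mem_QsetStar_two_two_iff]
  refine ⟨fun hs k => ?_, fun hs q hq => ?_⟩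
  · contrapose!
    exact significant_of_one_lt_f0 hs
  · have hN := neighbor_of_forall_f0_le_one hs (antipode_two_two_ne q).symm hq
    exact (neighbor_two_two_iff.1 hN).2 rfl

end Significance

section Maximum

lemma qpoly_le_rfun (W : Matrix (Plot a b) (Plot a b) ℝ) (s : BlockArray a b t) (x : ℝ) :
    qpoly W s x ≤ rfun t W x :=
  le_csSup (Set.finite_range _).bddAbove ⟨s, rfl⟩

lemma exists_antipodalCoincidences_eq_zero_and_coincidences_eq_six (ht : 3 ≤ t) :
    ∃ s : BlockArray 2 2 t, antipodalCoincidences s = 0 ∧ coincidences s = 6 := by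
  refine ⟨fun q => Fin.castLE ht (!![0, 0; 1, 2] q.1 q.2), ?_⟩
  simp only [antipodalCoincidences, coincidences, (Fin.castLE_injective ht).eq_iff]
  decide

end Maximum

theorem optimality_t_eq_p_sub_one_a_eq_b_eq_two_general (ht : 3 ≤ t) :
    (∀ s : BlockArray 2 2 t,
       qpoly (Bmat (Plot 2 2)) s (1 / 2 : ℝ) ≤ 2 ∧
       (qpoly (Bmat (Plot 2 2)) s (1 / 2 : ℝ) = 2 ↔ ∃ i, s ∈ QsetStar 2 2 t i)) ∧
    (∀ x : ℝ, x ≠ (1 / 2 : ℝ) → (2 : ℝ) < rfun t (Bmat (Plot 2 2)) x) := by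
  refine ⟨fun s => ⟨?_, ?_⟩, fun x hx => ?_⟩
  · rw [qpoly_two_two_half]
    exact sub_le_self _ (by positivity)
  · rw [qpoly_two_two_half, ← antipodalCoincidences_eq_zero_iff_exists_mem_QsetStar]
    simp
  · obtain ⟨s, hm, hN⟩ := exists_antipodalCoincidences_eq_zero_and_coincidences_eq_six ht
    have hx' : 0 < (1 - 2 * x) ^ 2 := sq_pos_of_ne_zero fun h => hx (by linarith)
    calc (2 : ℝ) < qpoly (Bmat (Plot 2 2)) s x := by
          rw [qpoly_two_two, hm, hN]
          push_cast
          linarith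
      _ ≤ rfun t (Bmat (Plot 2 2)) x := qpoly_le_rfun _ s x

/-- Theorem `t=p-1`, case `a = b = 2`, `t = 3`: `x* = 1/2`, `y* = 2` and
`Q = Q₁* ∪ Q₂*`. -/
theorem optimality_t_eq_p_sub_one_a_eq_b_eq_two :
    (∀ s : BlockArray 2 2 3,
       qpoly (Bmat (Plot 2 2)) s (1 / 2 : ℝ) ≤ 2 ∧
       (qpoly (Bmat (Plot 2 2)) s (1 / 2 : ℝ) = 2 ↔
         s ∈ QsetStar 2 2 3 1 ∪ QsetStar 2 2 3 2)) ∧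
    (∀ x : ℝ, x ≠ (1 / 2 : ℝ) → (2 : ℝ) < rfun 3 (Bmat (Plot 2 2)) x) := by
  simpa only [exists_mem_QsetStar_two_two_three_iff] using
    optimality_t_eq_p_sub_one_a_eq_b_eq_two_general (le_refl 3)

end TwoDim
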